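/- arXiv:1205.1348 — 2 statements merged into one kernel-verified Lean document; each statement's English description precedes it below -/
import Mathlib

section
/- For every even integer k with 2 ≤ k ≤ 2n, the colon ideal I^k : m equals I^k; equivalently, the graded maximal ideal m is not an associated prime of S/I^k, so depth(S/I^k) > 0. -/
open MvPolynomial

noncomputable section

/-- The depth of a module `M` with respect to an ideal `J`: the supremum of the lengths of
`M`-regular sequences consisting of elements of `J`. -/
noncomputable def depthWrt {R : Type*} [CommRing R] (J : Ideal R)
    (M : Type*) [AddCommGroup M] [Module R M] : ℕ∞ :=
  sSup {k : ℕ∞ | ∃ rs : List R, (rs.length : ℕ∞) = k ∧ (∀ r ∈ rs, r ∈ J) ∧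
    RingTheory.Sequence.IsRegular M rs}

/-- The type of the `2n+4` variables `a, b, c, d, x₁, y₁, …, xₙ, yₙ`. -/
abbrev Vars (n : ℕ) : Type := Fin 4 ⊕ Fin n ⊕ Fin n

variable (K : Type*) [Field K] (n : ℕ)

/-- The variable `a`. -/
def va : MvPolynomial (Vars n) K := X (Sum.inl 0)
/-- The variable `b`. -/
def vb : MvPolynomial (Vars n) K := X (Sum.inl 1)
/-- The variable `c`. -/
def vc : MvPolynomial (Vars n) K := X (Sum.inl 2)
/-- The variable `d`. -/
def vd : MvPolynomial (Vars n) K := X (Sum.inl 3)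
/-- The variable `xᵢ` (for `i = 0, …, n-1` corresponding to `x₁, …, xₙ`). -/
def vx (i : Fin n) : MvPolynomial (Vars n) K := X (Sum.inr (Sum.inl i))
/-- The variable `yᵢ` (for `i = 0, …, n-1` corresponding to `y₁, …, yₙ`). -/
def vy (i : Fin n) : MvPolynomial (Vars n) K := X (Sum.inr (Sum.inr i))

/-- The monomial ideal
`I = (a⁶, a⁵b, ab⁵, b⁶, a⁴b⁴c, a⁴b⁴d, a⁴x₁y₁², b⁴x₁²y₁, …, a⁴xₙyₙ², b⁴xₙ²yₙ)`. -/
def idealI : Ideal (MvPolynomial (Vars n) K) :=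
  Ideal.span
    ({va K n ^ 6, va K n ^ 5 * vb K n, va K n * vb K n ^ 5, vb K n ^ 6,
      va K n ^ 4 * vb K n ^ 4 * vc K n, va K n ^ 4 * vb K n ^ 4 * vd K n} ∪
     Set.range (fun i => va K n ^ 4 * vx K n i * vy K n i ^ 2) ∪
     Set.range (fun i => vb K n ^ 4 * vx K n i ^ 2 * vy K n i))

/-- The graded maximal ideal `m = (a,b,c,d,x₁,y₁,…,xₙ,yₙ)`. -/
def mMax : Ideal (MvPolynomial (Vars n) K) := Ideal.span (Set.range X)

def ExpRep (n k : ℕ) (u : Vars n →₀ ℕ) : Prop :=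
  ∃ e0 e1 e5 e6 rc rd : ℕ, ∃ p q : Fin n → ℕ,
    e0 + e1 + e5 + e6 + rc + rd + ∑ i, p i + ∑ i, q i = k ∧
    6 * e0 + 5 * e1 + e5 + 4 * rc + 4 * rd + 4 * ∑ i, p i ≤ u (Sum.inl 0) ∧
    e1 + 5 * e5 + 6 * e6 + 4 * rc + 4 * rd + 4 * ∑ i, q i ≤ u (Sum.inl 1) ∧
    rc ≤ u (Sum.inl 2) ∧ rd ≤ u (Sum.inl 3) ∧
    (∀ i, p i + 2 * q i ≤ u (Sum.inr (Sum.inl i))) ∧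
    (∀ i, 2 * p i + q i ≤ u (Sum.inr (Sum.inr i)))

theorem ExpRep.mono {n k : ℕ} {u v : Vars n →₀ ℕ} (h : ExpRep n k u) (huv : u ≤ v) : ExpRep n k v := by
  obtain ⟨e0, e1, e5, e6, rc, rd, p, q, h0, h1, h2, h3, h4, h5, h6⟩ := h
  exact ⟨e0, e1, e5, e6, rc, rd, p, q, h0, h1.trans (huv _), h2.trans (huv _), h3.trans (huv _),
    h4.trans (huv _), fun i => (h5 i).trans (huv _), fun i => (h6 i).trans (huv _)⟩

theorem ExpRep.add {n k l : ℕ} {u v : Vars n →₀ ℕ} (h : ExpRep n k u) (h' : ExpRep n l v) :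
    ExpRep n (k + l) (u + v) := by
  obtain ⟨e0, e1, e5, e6, rc, rd, p, q, h0, h1, h2, h3, h4, h5, h6⟩ := h
  obtain ⟨e0', e1', e5', e6', rc', rd', p', q', h0', h1', h2', h3', h4', h5', h6'⟩ := h'
  refine ⟨e0 + e0', e1 + e1', e5 + e5', e6 + e6', rc + rc', rd + rd', fun i => p i + p' i,
    fun i => q i + q' i, ?_, ?_, ?_, ?_, ?_, fun i => ?_, fun i => ?_⟩
  all_goals simp only [Finset.sum_add_distrib, Finsupp.add_apply]
  all_goals try have := h5 i
  all_goals try have := h5' i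
  all_goals try have := h6 i
  all_goals try have := h6' i
  all_goals omega

theorem idealI_le (K : Type*) [Field K] (n : ℕ) : idealI K n ≤
    Ideal.span ((fun u => monomial u (1 : K)) '' {u | ExpRep n 1 u}) := by
  rw [idealI, Ideal.span_le]
  rintro f ((hf | ⟨i, rfl⟩) | ⟨i, rfl⟩)
  · simp only [Set.mem_insert_iff, Set.mem_singleton_iff] at hf
    rcases hf with rfl | rfl | rfl | rfl | rfl | rfl <;> apply Ideal.subset_span
    · refine ⟨Finsupp.single (Sum.inl 0) 6, ⟨1, 0, 0, 0, 0, 0, 0, 0, ?_⟩, ?_⟩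
      · simp
      · simp [va, X_pow_eq_monomial]
    · refine ⟨Finsupp.single (Sum.inl 0) 5 + Finsupp.single (Sum.inl 1) 1,
        ⟨0, 1, 0, 0, 0, 0, 0, 0, ?_⟩, ?_⟩
      · simp
      · simp only [va, vb, X_pow_eq_monomial]
        simp [X, monomial_mul]
    · refine ⟨Finsupp.single (Sum.inl 0) 1 + Finsupp.single (Sum.inl 1) 5,
        ⟨0, 0, 1, 0, 0, 0, 0, 0, ?_⟩, ?_⟩
      · simp
      · simp only [va, vb, X_pow_eq_monomial]
        simp [X, monomial_mul]
    · refine ⟨Finsupp.single (Sum.inl 1) 6, ⟨0, 0, 0, 1, 0, 0, 0, 0, ?_⟩, ?_⟩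
      · simp
      · simp [vb, X_pow_eq_monomial]
    · refine ⟨Finsupp.single (Sum.inl 0) 4 + Finsupp.single (Sum.inl 1) 4 +
        Finsupp.single (Sum.inl 2) 1, ⟨0, 0, 0, 0, 1, 0, 0, 0, ?_⟩, ?_⟩
      · simp
      · simp only [va, vb, vc, X_pow_eq_monomial]
        simp [X, monomial_mul]
    · refine ⟨Finsupp.single (Sum.inl 0) 4 + Finsupp.single (Sum.inl 1) 4 +
        Finsupp.single (Sum.inl 3) 1, ⟨0, 0, 0, 0, 0, 1, 0, 0, ?_⟩, ?_⟩
      · simp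
      · simp only [va, vb, vd, X_pow_eq_monomial]
        simp [X, monomial_mul]
  · apply Ideal.subset_span
    refine ⟨Finsupp.single (Sum.inl 0) 4 + Finsupp.single (Sum.inr (Sum.inl i)) 1 +
        Finsupp.single (Sum.inr (Sum.inr i)) 2, ⟨0, 0, 0, 0, 0, 0, Pi.single i 1, 0, ?_⟩, ?_⟩
    · simp [Pi.single_apply, Finsupp.single_apply]
      constructor <;> intro j <;> split_ifs <;> simp_all
    · simp only [va, vx, vy, X_pow_eq_monomial]
      simp [X, monomial_mul]
  · apply Ideal.subset_span
    refine ⟨Finsupp.single (Sum.inl 1) 4 + Finsupp.single (Sum.inr (Sum.inl i)) 2 +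
        Finsupp.single (Sum.inr (Sum.inr i)) 1, ⟨0, 0, 0, 0, 0, 0, 0, Pi.single i 1, ?_⟩, ?_⟩
    · simp [Pi.single_apply, Finsupp.single_apply]
      constructor <;> intro j <;> split_ifs <;> simp_all
    · simp only [vb, vx, vy, X_pow_eq_monomial]
      simp [X, monomial_mul]

theorem idealI_pow_le (K : Type*) [Field K] (n k : ℕ) : idealI K n ^ k ≤
    Ideal.span ((fun u => monomial u (1 : K)) '' {u | ExpRep n k u}) := by
  induction k with
  | zero =>
    have : (1 : MvPolynomial (Vars n) K) ∈
        Ideal.span ((fun u => monomial u (1 : K)) '' {u | ExpRep n 0 u}) :=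
      Ideal.subset_span ⟨0, ⟨0, 0, 0, 0, 0, 0, 0, 0, by simp⟩, rfl⟩
    rw [(Ideal.eq_top_iff_one _).2 this]
    exact le_top
  | succ k ih =>
    rw [pow_succ]
    refine (Ideal.mul_mono ih (idealI_le K n)).trans ?_
    rw [Ideal.span_mul_span', Ideal.span_le]
    rintro _ ⟨_, ⟨u, hu, rfl⟩, _, ⟨v, hv, rfl⟩, rfl⟩
    exact Ideal.subset_span ⟨u + v, ExpRep.add hu hv, by simp [monomial_mul]⟩

theorem rep_of_mem (K : Type*) [Field K] (n k : ℕ) (f : MvPolynomial (Vars n) K)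
    (hf : f ∈ idealI K n ^ k) (u : Vars n →₀ ℕ) (hu : u ∈ f.support) : ExpRep n k u := by
  obtain ⟨v, hv, hvu⟩ := mem_ideal_span_monomial_image.1 (idealI_pow_le K n k hf) u hu
  exact ExpRep.mono hv hvu

theorem monomial_mem (K : Type*) [Field K] (n k : ℕ) (u : Vars n →₀ ℕ) (h : ExpRep n k u) :
    monomial u (1 : K) ∈ idealI K n ^ k := by
  obtain ⟨e0, e1, e5, e6, rc, rd, p, q, h0, h1, h2, h3, h4, h5, h6⟩ := h
  have hm : monomial u (1 : K) = va K n ^ u (Sum.inl 0) * vb K n ^ u (Sum.inl 1) *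
      vc K n ^ u (Sum.inl 2) * vd K n ^ u (Sum.inl 3) *
      ((∏ i, vx K n i ^ u (Sum.inr (Sum.inl i))) * ∏ i, vy K n i ^ u (Sum.inr (Sum.inr i))) := by
    rw [monomial_eq, Finsupp.prod_fintype _ _ (by simp), Fintype.prod_sum_type,
      Fintype.prod_sum_type, Fin.prod_univ_four]
    simp [va, vb, vc, vd, vx, vy]
  have hG : (va K n ^ 6) ^ e0 * (va K n ^ 5 * vb K n) ^ e1 * (va K n * vb K n ^ 5) ^ e5 *
      (vb K n ^ 6) ^ e6 * (va K n ^ 4 * vb K n ^ 4 * vc K n) ^ rc *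
      (va K n ^ 4 * vb K n ^ 4 * vd K n) ^ rd *
      (∏ i, (va K n ^ 4 * vx K n i * vy K n i ^ 2) ^ p i) *
      (∏ i, (vb K n ^ 4 * vx K n i ^ 2 * vy K n i) ^ q i) ∈ idealI K n ^ k := by
    rw [← h0, pow_add, pow_add, pow_add, pow_add, pow_add, pow_add, pow_add,
      ← Finset.prod_pow_eq_pow_sum, ← Finset.prod_pow_eq_pow_sum]
    have hs := @Ideal.subset_span (MvPolynomial (Vars n) K) _
      ({va K n ^ 6, va K n ^ 5 * vb K n, va K n * vb K n ^ 5, vb K n ^ 6,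
      va K n ^ 4 * vb K n ^ 4 * vc K n, va K n ^ 4 * vb K n ^ 4 * vd K n} ∪
     Set.range (fun i => va K n ^ 4 * vx K n i * vy K n i ^ 2) ∪
     Set.range (fun i => vb K n ^ 4 * vx K n i ^ 2 * vy K n i))
    refine Ideal.mul_mem_mul (Ideal.mul_mem_mul (Ideal.mul_mem_mul (Ideal.mul_mem_mul
      (Ideal.mul_mem_mul (Ideal.mul_mem_mul (Ideal.mul_mem_mul ?_ ?_) ?_) ?_) ?_) ?_)
      (Ideal.prod_mem_prod fun i _ => ?_)) (Ideal.prod_mem_prod fun i _ => ?_)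
    all_goals
      apply Ideal.pow_mem_pow
      apply hs
      simp
  refine Ideal.mem_of_dvd _ ?_ hG
  rw [hm]
  have e : (va K n ^ 6) ^ e0 * (va K n ^ 5 * vb K n) ^ e1 * (va K n * vb K n ^ 5) ^ e5 *
      (vb K n ^ 6) ^ e6 * (va K n ^ 4 * vb K n ^ 4 * vc K n) ^ rc *
      (va K n ^ 4 * vb K n ^ 4 * vd K n) ^ rd *
      (∏ i, (va K n ^ 4 * vx K n i * vy K n i ^ 2) ^ p i) *
      (∏ i, (vb K n ^ 4 * vx K n i ^ 2 * vy K n i) ^ q i) =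
      va K n ^ (6 * e0 + 5 * e1 + e5 + 4 * rc + 4 * rd + 4 * ∑ i, p i) *
      vb K n ^ (e1 + 5 * e5 + 6 * e6 + 4 * rc + 4 * rd + 4 * ∑ i, q i) *
      vc K n ^ rc * vd K n ^ rd *
      ((∏ i, vx K n i ^ (p i + 2 * q i)) * ∏ i, vy K n i ^ (2 * p i + q i)) := by
    simp only [mul_pow, Finset.prod_mul_distrib, pow_add, Finset.prod_pow_eq_pow_sum, pow_mul]
    ring
  rw [e]
  exact mul_dvd_mul (mul_dvd_mul (mul_dvd_mul (mul_dvd_mul (pow_dvd_pow _ h1) (pow_dvd_pow _ h2))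
    (pow_dvd_pow _ h3)) (pow_dvd_pow _ h4))
    (mul_dvd_mul (Finset.prod_dvd_prod_of_dvd _ _ fun i _ => pow_dvd_pow _ (h5 i))
      (Finset.prod_dvd_prod_of_dvd _ _ fun i _ => pow_dvd_pow _ (h6 i)))

theorem sum_upd {n : ℕ} (p : Fin n → ℕ) (i : Fin n) (v : ℕ) :
    ∑ j, Function.update p i v j + p i = ∑ j, p j + v := by
  rw [Finset.sum_update_of_mem (Finset.mem_univ i),
    ← Finset.add_sum_erase _ p (Finset.mem_univ i), Finset.sdiff_singleton_eq_erase]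
  omega

/-- The combinatorial core. -/
theorem rep_core (n k : ℕ) (hk : Even k) (u : Vars n →₀ ℕ)
    (h : ∀ v, ExpRep n k (u + Finsupp.single v 1)) : ExpRep n k u := by
  obtain ⟨e0, e1, e5, e6, rc, rd, p, q, h0, h1, h2, h3, h4, h5, h6⟩ := h (Sum.inl 2)
  simp [Finsupp.single_apply] at h1 h2 h3 h4 h5 h6
  by_cases hrc : rc ≤ u (Sum.inl 2)
  · exact ⟨e0, e1, e5, e6, rc, rd, p, q, h0, h1, h2, hrc, h4, h5, h6⟩
  by_cases he0 : 1 ≤ e0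
  · exact ⟨e0 - 1 , e1 + 2, e5, e6, rc - 1, rd, p, q, by omega, by omega, by omega, by omega,
      h4, h5, h6⟩
  by_cases he1 : 1 ≤ e1
  · exact ⟨e0 + 1, e1 - 1, e5 + 1, e6, rc - 1, rd, p, q, by omega, by omega, by omega, by omega,
      h4, h5, h6⟩
  by_cases he5 : 1 ≤ e5
  · exact ⟨e0, e1 + 1, e5 - 1, e6 + 1, rc - 1, rd, p, q, by omega, by omega, by omega, by omega,
      h4, h5, h6⟩
  by_cases he6 : 1 ≤ e6
  · exact ⟨e0, e1, e5 + 2, e6 - 1, rc - 1, rd, p, q, by omega, by omega, by omega, by omega,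
      h4, h5, h6⟩
  by_cases hr2 : 2 ≤ rc
  · exact ⟨e0 + 1, e1, e5, e6 + 1, rc - 2, rd, p, q, by omega, by omega, by omega, by omega,
      h4, h5, h6⟩
  by_cases hrd : 1 ≤ rd
  · exact ⟨e0 + 1, e1, e5, e6 + 1, rc - 1, rd - 1, p, q, by omega, by omega, by omega, by omega,
      by omega, h5, h6⟩
  obtain rfl : e0 = 0 := by omega
  obtain rfl : e1 = 0 := by omega
  obtain rfl : e5 = 0 := by omega
  obtain rfl : e6 = 0 := by omega
  obtain rfl : rc = 1 := by omega
  obtain rfl : rd = 0 := by omega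
  obtain ⟨i, hi⟩ : ∃ i, p i ≠ q i := by
    by_contra! hpq
    have : ∑ i, p i = ∑ i, q i := Finset.sum_congr rfl fun i _ => hpq i
    obtain ⟨m, hm⟩ := hk
    omega
  have h5i := h5 i
  have h6i := h6 i
  -- changing the representation at `i`
  have key : ∀ e0 e6 p' q' : ℕ, e0 + e6 + p' + q' = p i + q i + 1 →
      6 * e0 + 4 * p' ≤ 4 + 4 * p i → 6 * e6 + 4 * q' ≤ 4 + 4 * q i →
      p' + 2 * q' ≤ u (Sum.inr (Sum.inl i)) → 2 * p' + q' ≤ u (Sum.inr (Sum.inr i)) →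
      ExpRep n k u := by
    intro e0 e6 p' q' a1 a2 a3 a4 a5
    have sp := sum_upd p i p'
    have sq := sum_upd q i q'
    refine ⟨e0, 0, 0, e6, 0, 0, Function.update p i p', Function.update q i q',
      by omega, by omega, by omega, by omega, by omega, fun j => ?_, fun j => ?_⟩
    · by_cases hj : j = i
      · subst hj; simpa using a4
      · simpa [hj] using h5 j
    · by_cases hj : j = i
      · subst hj; simpa using a5
      · simpa [hj] using h6 j
  by_cases hq2 : 2 ≤ q i
  · exact key 0 2 (p i + 1) (q i - 2) (by omega) (by omega) (by omega) (by omega) (by omega)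
  by_cases hp2 : 2 ≤ p i
  · exact key 2 0 (p i - 2) (q i + 1) (by omega) (by omega) (by omega) (by omega) (by omega)
  by_cases hq : q i = 1
  · have hp : p i = 0 := by omega
    by_cases ht : 2 ≤ u (Sum.inr (Sum.inr i))
    · exact key 0 1 1 0 (by omega) (by omega) (by omega) (by omega) (by omega)
    · obtain ⟨e0, e1, e5, e6, rc, rd, p', q', g0, g1, g2, g3, g4, g5, g6⟩ :=
        h (Sum.inr (Sum.inl i))
      simp [Finsupp.single_apply] at g1 g2 g3 g4 g5 g6
      refine ⟨e0, e1, e5, e6, rc, rd, p', q', g0, g1, g2, g3, g4, fun j => ?_, g6⟩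
      have := g5 j
      have := g6 j
      by_cases hj : j = i
      · subst hj; omega
      · have := g5 j
        rw [if_neg (Ne.symm hj)] at this
        omega
  · have hq0 : q i = 0 := by omega
    have hp : p i = 1 := by omega
    by_cases ht : 2 ≤ u (Sum.inr (Sum.inl i))
    · exact key 1 0 0 1 (by omega) (by omega) (by omega) (by omega) (by omega)
    · obtain ⟨e0, e1, e5, e6, rc, rd, p', q', g0, g1, g2, g3, g4, g5, g6⟩ :=
        h (Sum.inr (Sum.inr i))
      simp [Finsupp.single_apply] at g1 g2 g3 g4 g5 g6
      refine ⟨e0, e1, e5, e6, rc, rd, p', q', g0, g1, g2, g3, g4, g5, fun j => ?_⟩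
      have := g5 j
      have := g6 j
      by_cases hj : j = i
      · subst hj; omega
      · have := g6 j
        rw [if_neg (Ne.symm hj)] at this
        omega

theorem mem_of_X_mul (K : Type*) [Field K] (n k : ℕ) (hk : Even k) (f : MvPolynomial (Vars n) K)
    (hf : ∀ v, X v * f ∈ idealI K n ^ k) : f ∈ idealI K n ^ k := by
  rw [f.as_sum]
  refine Ideal.sum_mem _ fun u hu => ?_
  rw [← mul_one (coeff u f), ← C_mul_monomial]
  refine Ideal.mul_mem_left _ _ (monomial_mem K n k u (rep_core n k hk u fun v => ?_))
  apply rep_of_mem K n k _ (hf v)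
  rw [mem_support_iff, add_comm, coeff_X_mul]
  exact mem_support_iff.1 hu

/-- For every even integer `k` with `2 ≤ k ≤ 2n`, the colon ideal `Iᵏ : m` equals `Iᵏ`;
equivalently, `m` is not an associated prime of `S/Iᵏ`, so `depth(S/Iᵏ) > 0`. -/
theorem colon_max_eq_of_even (k : ℕ) (heven : Even k) (h1 : 2 ≤ k) (h2 : k ≤ 2 * n) :
    ((idealI K n) ^ k).colon (mMax K n) = (idealI K n) ^ k ∧
    mMax K n ∉ associatedPrimes (MvPolynomial (Vars n) K)
      (MvPolynomial (Vars n) K ⧸ (idealI K n) ^ k) ∧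
    0 < depthWrt (mMax K n) (MvPolynomial (Vars n) K ⧸ (idealI K n) ^ k) := by
  have hcol : ((idealI K n) ^ k).colon (mMax K n) = (idealI K n) ^ k := by
    refine le_antisymm (fun f hf => ?_) Ideal.le_colon
    refine mem_of_X_mul K n k heven f fun v => ?_
    have := Submodule.mem_colon.1 hf (X v) (Ideal.subset_span ⟨v, rfl⟩)
    rwa [smul_eq_mul, mul_comm] at this
  have hker : mMax K n = RingHom.ker (constantCoeff : MvPolynomial (Vars n) K →+* K) := by
    ext f
    rw [mMax, ← Set.image_univ, mem_ideal_span_X_image, RingHom.mem_ker, constantCoeff_eq]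
    constructor
    · intro h
      by_contra h0
      obtain ⟨i, -, hi⟩ := h 0 (mem_support_iff.2 h0)
      exact hi rfl
    · intro h m hm
      have hm0 : m ≠ 0 := by
        rintro rfl
        exact mem_support_iff.1 hm h
      obtain ⟨i, hi⟩ := Finsupp.ne_iff.1 hm0
      exact ⟨i, trivial, hi⟩
  have hmax : (mMax K n).IsMaximal := by
    rw [hker]
    exact RingHom.ker_isMaximal_of_surjective _ fun c => ⟨C c, constantCoeff_C _ c⟩
  have hass : mMax K n ∉ associatedPrimes (MvPolynomial (Vars n) K)
      (MvPolynomial (Vars n) K ⧸ (idealI K n) ^ k) := by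
    intro h
    rw [AssociatedPrimes.mem_iff, isAssociatedPrime_iff] at h
    obtain ⟨hp, x, hx⟩ := h
    obtain ⟨f, rfl⟩ := Ideal.Quotient.mk_surjective x
    have hf : f ∈ idealI K n ^ k := by
      refine mem_of_X_mul K n k heven f fun v => ?_
      have hv : (X v : MvPolynomial (Vars n) K) ∈ mMax K n := Ideal.subset_span ⟨v, rfl⟩
      rw [hx, Submodule.mem_colon_singleton, Submodule.mem_bot] at hv
      exact Ideal.Quotient.eq_zero_iff_mem.1 hv
    apply hp.ne_top
    rw [hx, Ideal.Quotient.eq_zero_iff_mem.2 hf]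
    simp
  refine ⟨hcol, hass, ?_⟩
  obtain ⟨r, hr, hreg⟩ : ∃ r ∈ mMax K n,
      IsSMulRegular (MvPolynomial (Vars n) K ⧸ (idealI K n) ^ k) r := by
    by_contra! hcon
    have hfin := associatedPrimes.finite (MvPolynomial (Vars n) K)
      (MvPolynomial (Vars n) K ⧸ (idealI K n) ^ k)
    have hsub : (mMax K n : Set (MvPolynomial (Vars n) K)) ⊆
        ⋃ p ∈ (hfin.toFinset : Set (Ideal (MvPolynomial (Vars n) K))), (id p : Ideal _) := by
      intro r hr
      have h0 := hcon r hr
      rw [isSMulRegular_iff_right_eq_zero_of_smul] at h0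
      push Not at h0
      obtain ⟨x, hx, hx0⟩ := h0
      have : r ∈ ⋃ p ∈ associatedPrimes (MvPolynomial (Vars n) K)
          (MvPolynomial (Vars n) K ⧸ (idealI K n) ^ k), (p : Set (MvPolynomial (Vars n) K)) := by
        rw [biUnion_associatedPrimes_eq_zero_divisors]
        exact ⟨x, hx0, hx⟩
      simpa using this
    obtain ⟨p, hp, hle⟩ := (Ideal.subset_union_prime ⊤ ⊤ (fun p hp _ _ => by
      rw [Set.Finite.mem_toFinset] at hp
      exact hp.isPrime)).1 hsub
    rw [Set.Finite.mem_toFinset] at hp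
    have hpm := hmax.eq_of_le hp.isPrime.ne_top hle
    exact hass (hpm ▸ hp)
  have hI : idealI K n ^ k ≤ mMax K n := by
    refine (Ideal.pow_le_self (by omega)).trans ?_
    rw [hker, idealI, Ideal.span_le]
    rintro f ((hf | ⟨i, rfl⟩) | ⟨i, rfl⟩)
    · simp only [Set.mem_insert_iff, Set.mem_singleton_iff] at hf
      rcases hf with rfl | rfl | rfl | rfl | rfl | rfl <;> simp [va, vb, vc, vd, RingHom.mem_ker]
    · simp [va, vx, vy, RingHom.mem_ker]
    · simp [vb, vx, vy, RingHom.mem_ker]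
  have hR : RingTheory.Sequence.IsRegular (MvPolynomial (Vars n) K ⧸ (idealI K n) ^ k) [r] := by
    refine ⟨(RingTheory.Sequence.isWeaklyRegular_singleton_iff _ r).2 hreg, fun htop => ?_⟩
    rw [Ideal.ofList_singleton, Submodule.ideal_span_singleton_smul] at htop
    have h1' : (1 : MvPolynomial (Vars n) K ⧸ (idealI K n) ^ k) ∈
        (⊤ : Submodule (MvPolynomial (Vars n) K) _) := trivial
    rw [htop] at h1'
    obtain ⟨x, -, hx⟩ := h1'
    obtain ⟨f, rfl⟩ := Ideal.Quotient.mk_surjective x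
    have hx' : Ideal.Quotient.mk (idealI K n ^ k) (r * f) = Ideal.Quotient.mk _ 1 := hx
    rw [Ideal.Quotient.eq] at hx'
    apply hmax.ne_top
    rw [Ideal.eq_top_iff_one]
    have := (mMax K n).sub_mem (Ideal.mul_mem_right f _ hr) (hI hx')
    simpa using this
  have : (1 : ℕ∞) ≤ depthWrt (mMax K n) (MvPolynomial (Vars n) K ⧸ (idealI K n) ^ k) :=
    le_sSup ⟨[r], by simp, by simpa using hr, hR⟩
  exact lt_of_lt_of_le one_pos this
end
end

section
/- For every even integer k with 2 ≤ k ≤ 2n, the prime ideal P = (a,b,c,d,x_1,y_1,…,x_{n-1},y_{n-1},x_n) (i.e., the ideal generated by all variables except y_n) is an associated prime of S/I^k. -/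
open MvPolynomial

noncomputable section

variable (K : Type*) [Field K] (n : ℕ)

/-- The prime ideal `P = (a,b,c,d,x₁,y₁,…,x_{n-1},y_{n-1},xₙ)` generated by all the
variables except `yₙ`. -/
def idealP : Ideal (MvPolynomial (Vars n) K) :=
  Ideal.span
    ({va K n, vb K n, vc K n, vd K n} ∪ Set.range (vx K n) ∪
     (vy K n) '' {i : Fin n | (i : ℕ) + 1 < n})

/-- exponent vectors of monomials in the k-th power -/
def EE (n : ℕ) (k : ℕ) : Set (Vars n →₀ ℕ) :=
  {s | ∃ (p q : Fin n → ℕ) (u1 u2 u3 u4 t : ℕ),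
    (∀ i, p i + 2 * q i ≤ s (Sum.inr (Sum.inl i))) ∧
    (∀ i, 2 * p i + q i ≤ s (Sum.inr (Sum.inr i))) ∧
    t ≤ s (Sum.inl 2) + s (Sum.inl 3) ∧
    4 * (∑ i, p i) + 4 * t + 6 * u1 + 5 * u2 + u3 ≤ s (Sum.inl 0) ∧
    4 * (∑ i, q i) + 4 * t + u2 + 5 * u3 + 6 * u4 ≤ s (Sum.inl 1) ∧
    (∑ i, p i) + (∑ i, q i) + u1 + u2 + u3 + u4 + t = k}

theorem EE_up (k : ℕ) {s t : Vars n →₀ ℕ} (hs : s ∈ EE n k) (h : s ≤ t) : t ∈ EE n k := by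
  obtain ⟨p, q, u1, u2, u3, u4, t', h1, h2, h3, h4, h5, h6⟩ := hs
  refine ⟨p, q, u1, u2, u3, u4, t', fun i => (h1 i).trans (h _), fun i => (h2 i).trans (h _),
    h3.trans (add_le_add (h _) (h _)), h4.trans (h _), h5.trans (h _), h6⟩

theorem pow_le_EE (k : ℕ) : idealI K n ^ k ≤
    Ideal.span ((fun s => monomial s (1 : K)) '' EE n k) := by
  induction k with
  | zero =>
    intro f _
    rw [mem_ideal_span_monomial_image]
    intro s _
    refine ⟨s, ⟨0, 0, 0, 0, 0, 0, 0, ?_⟩, le_rfl⟩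
    simp
  | succ k ih =>
    rw [pow_succ]
    refine (Ideal.mul_mono_left ih).trans ?_
    unfold idealI
    rw [Ideal.span_mul_span', Ideal.span_le]
    rintro _ ⟨_, ⟨s, hs, rfl⟩, g, hg, rfl⟩
    obtain ⟨p, q, u1, u2, u3, u4, t, h1, h2, h3, h4, h5, h6⟩ := hs
    have key : ∃ γ : Vars n →₀ ℕ, g = monomial γ 1 ∧ s + γ ∈ EE n (k + 1) := by
      rcases hg with (hg | ⟨i, rfl⟩) | ⟨i, rfl⟩
      · simp only [Set.mem_insert_iff, Set.mem_singleton_iff] at hg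
        rcases hg with rfl | rfl | rfl | rfl | rfl | rfl
        · refine ⟨_, by simp only [va, vb, vc, vd, X, monomial_pow, monomial_mul, one_pow, one_mul]; rfl, p, q, u1 + 1, u2, u3, u4, t, ?_⟩
          simp
          refine ⟨h1, h2, ?_, ?_, ?_, ?_⟩ <;> omega
        · refine ⟨_, by simp only [va, vb, vc, vd, X, monomial_pow, monomial_mul, one_pow, one_mul]; rfl, p, q, u1, u2 + 1, u3, u4, t, ?_⟩
          simp
          refine ⟨h1, h2, ?_, ?_, ?_, ?_⟩ <;> omega
        · refine ⟨_, by simp only [va, vb, vc, vd, X, monomial_pow, monomial_mul, one_pow, one_mul]; rfl, p, q, u1, u2, u3 + 1, u4, t, ?_⟩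
          simp
          refine ⟨h1, h2, ?_, ?_, ?_, ?_⟩ <;> omega
        · refine ⟨_, by simp only [va, vb, vc, vd, X, monomial_pow, monomial_mul, one_pow, one_mul]; rfl, p, q, u1, u2, u3, u4 + 1, t, ?_⟩
          simp
          refine ⟨h1, h2, ?_, ?_, ?_, ?_⟩ <;> omega
        · refine ⟨_, by simp only [va, vb, vc, vd, X, monomial_pow, monomial_mul, one_pow, one_mul]; rfl, p, q, u1, u2, u3, u4, t + 1, ?_⟩
          simp
          refine ⟨h1, h2, ?_, ?_, ?_, ?_⟩ <;> omega
        · refine ⟨_, by simp only [va, vb, vc, vd, X, monomial_pow, monomial_mul, one_pow, one_mul]; rfl, p, q, u1, u2, u3, u4, t + 1, ?_⟩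
          simp
          refine ⟨h1, h2, ?_, ?_, ?_, ?_⟩ <;> omega
      · refine ⟨_, by simp only [va, vb, vx, vy, X, monomial_pow, monomial_mul, one_pow, one_mul]; rfl, p + Pi.single i 1, q, u1, u2, u3, u4, t, ?_⟩
        simp [Finset.sum_add_distrib, Finsupp.single_apply, Pi.single_apply]
        refine ⟨fun j => ?_, fun j => ?_, ?_, ?_, ?_, ?_⟩
        · have := h1 j
          by_cases e : i = j
          · subst e; simp; omega
          · simp [e, Ne.symm e]; omega
        · have := h2 j
          by_cases e : i = j
          · subst e; simp; omega
          · simp [e, Ne.symm e]; omega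
        all_goals omega
      · refine ⟨_, by simp only [va, vb, vx, vy, X, monomial_pow, monomial_mul, one_pow, one_mul]; rfl, p, q + Pi.single i 1, u1, u2, u3, u4, t, ?_⟩
        simp [Finset.sum_add_distrib, Finsupp.single_apply, Pi.single_apply]
        refine ⟨fun j => ?_, fun j => ?_, ?_, ?_, ?_, ?_⟩
        · have := h1 j
          by_cases e : i = j
          · subst e; simp; omega
          · simp [e, Ne.symm e]; omega
        · have := h2 j
          by_cases e : i = j
          · subst e; simp; omega
          · simp [e, Ne.symm e]; omega
        all_goals omega
    obtain ⟨γ, rfl, hγ⟩ := key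
    refine Ideal.subset_span ⟨s + γ, hγ, ?_⟩
    simp [monomial_mul]

/-- the variables in P -/
def SP (n : ℕ) : Set (Vars n) := {v | ∀ i : Fin n, v = Sum.inr (Sum.inr i) → (i : ℕ) + 1 < n}

theorem idealP_eq : idealP K n = Ideal.span (X '' SP n) := by
  unfold idealP
  congr 1
  ext f
  constructor
  · rintro ((hf | ⟨i, rfl⟩) | ⟨i, hi, rfl⟩)
    · simp only [Set.mem_insert_iff, Set.mem_singleton_iff] at hf
      rcases hf with rfl | rfl | rfl | rfl
      all_goals exact ⟨_, by simp [SP], rfl⟩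
    · exact ⟨_, by simp [SP], rfl⟩
    · refine ⟨Sum.inr (Sum.inr i), ?_, rfl⟩
      simpa [SP] using hi
  · rintro ⟨v, hv, rfl⟩
    rcases v with v | v | v
    · left; left
      fin_cases v <;> simp [va, vb, vc, vd]
    · left; right; exact ⟨v, rfl⟩
    · right; exact ⟨v, hv v rfl, rfl⟩

theorem isPrime_span_X_set {σ : Type*} (s : Set σ) :
    (Ideal.span (X '' s : Set (MvPolynomial σ K))).IsPrime := by
  classical
  let φ : MvPolynomial σ K →ₐ[K] MvPolynomial σ K := aeval (fun i => if i ∈ s then 0 else X i)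
  have h : Ideal.span (X '' s : Set (MvPolynomial σ K)) = RingHom.ker φ := by
    apply le_antisymm
    · rw [Ideal.span_le]
      rintro _ ⟨i, hi, rfl⟩
      simp [φ, RingHom.mem_ker, hi]
    · intro f hf
      have : ∀ f, f - φ f ∈ Ideal.span (X '' s : Set (MvPolynomial σ K)) := by
        intro f
        induction f using MvPolynomial.induction_on with
        | C a => simp [φ]
        | add p q hp hq =>
          have := Ideal.add_mem _ hp hq
          rw [map_add]; convert this using 1; ring
        | mul_X p i hp =>
          have e : p * X i - φ (p * X i) = (p - φ p) * X i + φ p * (X i - φ (X i)) := by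
            rw [map_mul]; ring
          rw [e]
          refine Ideal.add_mem _ (Ideal.mul_mem_right _ _ hp) (Ideal.mul_mem_left _ _ ?_)
          by_cases hi : i ∈ s
          · simp only [φ, aeval_X, hi, if_true, sub_zero]
            exact Ideal.subset_span ⟨i, hi, rfl⟩
          · simp [φ, hi]
      have h2 := this f
      rwa [RingHom.mem_ker.1 hf, sub_zero] at h2
  rw [h]
  exact RingHom.ker_isPrime _

/-- exponent of the i-th factor -/
def om (L : ℕ) (i : Fin n) : Vars n →₀ ℕ :=
  if (i : ℕ) < L then
    Finsupp.single (Sum.inl 0) 4 + Finsupp.single (Sum.inl 1) 4 +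
    Finsupp.single (Sum.inr (Sum.inl i)) 3 + Finsupp.single (Sum.inr (Sum.inr i)) 3
  else if (i : ℕ) + 1 < n then
    Finsupp.single (Sum.inr (Sum.inl i)) 1 + Finsupp.single (Sum.inr (Sum.inr i)) 1
  else
    Finsupp.single (Sum.inl 0) 4 +
    Finsupp.single (Sum.inr (Sum.inl i)) 1 + Finsupp.single (Sum.inr (Sum.inr i)) 2

/-- the i-th factor -/
def ww (L : ℕ) (i : Fin n) : MvPolynomial (Vars n) K :=
  if (i : ℕ) < L then va K n ^ 4 * vb K n ^ 4 * vx K n i ^ 3 * vy K n i ^ 3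
  else if (i : ℕ) + 1 < n then vx K n i * vy K n i
  else va K n ^ 4 * vx K n i * vy K n i ^ 2

/-- weight of the i-th factor -/
def ew (L : ℕ) (i : Fin n) : ℕ :=
  if (i : ℕ) < L then 2 else if (i : ℕ) + 1 < n then 0 else 1

theorem ww_eq (L : ℕ) (i : Fin n) : ww K n L i = monomial (om n L i) 1 := by
  unfold ww om
  split_ifs <;>
  simp [va, vb, vx, vy, X, monomial_pow, monomial_mul]

theorem gA (i : Fin n) : va K n ^ 4 * vx K n i * vy K n i ^ 2 ∈ idealI K n :=
  Ideal.subset_span (Or.inl (Or.inr ⟨i, rfl⟩))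
theorem gB (i : Fin n) : vb K n ^ 4 * vx K n i ^ 2 * vy K n i ∈ idealI K n :=
  Ideal.subset_span (Or.inr ⟨i, rfl⟩)
theorem g1 : va K n ^ 6 ∈ idealI K n := Ideal.subset_span (by simp)
theorem g2 : va K n ^ 5 * vb K n ∈ idealI K n := Ideal.subset_span (by simp)
theorem g3 : va K n * vb K n ^ 5 ∈ idealI K n := Ideal.subset_span (by simp)
theorem g4 : vb K n ^ 6 ∈ idealI K n := Ideal.subset_span (by simp)
theorem g5 : va K n ^ 4 * vb K n ^ 4 * vc K n ∈ idealI K n := Ideal.subset_span (by simp)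
theorem g6 : va K n ^ 4 * vb K n ^ 4 * vd K n ∈ idealI K n := Ideal.subset_span (by simp)

theorem ww_mem (L : ℕ) (i : Fin n) : ww K n L i ∈ idealI K n ^ ew n L i := by
  unfold ww ew
  split_ifs
  · rw [pow_two]
    convert Ideal.mul_mem_mul (gA K n i) (gB K n i) using 1
    ring
  · simp
  · rw [pow_one]; exact gA K n i

theorem prod_ww_mem (L : ℕ) (T : Finset (Fin n)) :
    ∏ i ∈ T, ww K n L i ∈ idealI K n ^ (∑ i ∈ T, ew n L i) := by
  rw [← Finset.prod_pow_eq_pow_sum]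
  exact Ideal.prod_mem_prod fun i _ => ww_mem K n L i

theorem sum_lt (L : ℕ) (hL : L + 1 ≤ n) : ∑ i : Fin n, (if (i : ℕ) < L then 1 else 0) = L := by
  rw [Fin.sum_univ_eq_sum_range (fun i => if i < L then 1 else 0) n, Finset.sum_ite]
  have : (Finset.range n).filter (fun i => i < L) = Finset.range L := by
    ext i; simp; omega
  simp [this]

theorem sum_last (hn : 1 ≤ n) : ∑ i : Fin n, (if (i : ℕ) + 1 < n then 0 else 1) = 1 := by
  obtain ⟨m, rfl⟩ : ∃ m, n = m + 1 := ⟨n - 1, by omega⟩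
  rw [Fin.sum_univ_castSucc]
  simp

theorem sum_ew (L : ℕ) (hL : L + 1 ≤ n) : ∑ i : Fin n, ew n L i = 2 * L + 1 := by
  have : ∀ i : Fin n, ew n L i = 2 * (if (i : ℕ) < L then 1 else 0) +
      (if (i : ℕ) + 1 < n then 0 else 1) := by
    intro i; unfold ew; split_ifs <;> omega
  simp only [this, Finset.sum_add_distrib, ← Finset.mul_sum, sum_lt n L hL,
    sum_last n (by omega)]

/-- the witness -/
def wit (L : ℕ) : MvPolynomial (Vars n) K := va K n ^ 4 * vb K n ^ 4 * ∏ i, ww K n L i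

/-- exponent of the witness -/
def mu (L : ℕ) : Vars n →₀ ℕ :=
  Finsupp.single (Sum.inl 0) 4 + Finsupp.single (Sum.inl 1) 4 + ∑ i, om n L i

theorem wit_eq (L : ℕ) : wit K n L = monomial (mu n L) 1 := by
  unfold wit mu
  have : ∏ i, ww K n L i = monomial (∑ i, om n L i) 1 := by
    simp only [ww_eq]
    rw [monomial_sum_one]
  rw [this]
  simp [va, vb, X, monomial_pow, monomial_mul]

theorem mem_of_eq {R : Type*} [CommRing R] {I : Ideal R} {x y r f : R} {m k l : ℕ}
    (hx : x ∈ I ^ m) (hy : y ∈ I ^ l) (hk : k = m + l) (hf : f = r * (x * y)) : f ∈ I ^ k := by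
  subst hk hf
  rw [pow_add]
  exact Ideal.mul_mem_left _ _ (Ideal.mul_mem_mul hx hy)

theorem mul2 {R : Type*} [CommRing R] {I : Ideal R} {x y : R}
    (hx : x ∈ I) (hy : y ∈ I) : x * y ∈ I ^ 2 := by
  rw [pow_two]; exact Ideal.mul_mem_mul hx hy

theorem mul3 {R : Type*} [CommRing R] {I : Ideal R} {x y z : R}
    (hx : x ∈ I) (hy : y ∈ I) (hz : z ∈ I) : x * y * z ∈ I ^ 3 := by
  rw [pow_succ]; exact Ideal.mul_mem_mul (mul2 hx hy) hz

theorem X_mul_wit (L : ℕ) (hL : L + 1 ≤ n) (v : Vars n) (hv : v ∈ SP n) :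
    X v * wit K n L ∈ idealI K n ^ (2 * L + 2) := by
  have hW := prod_ww_mem K n L Finset.univ
  rw [sum_ew n L hL] at hW
  unfold wit
  have single : ∀ g r : MvPolynomial (Vars n) K, g ∈ idealI K n →
      X v * (va K n ^ 4 * vb K n ^ 4) = r * g →
      X v * (va K n ^ 4 * vb K n ^ 4 * ∏ i, ww K n L i) ∈ idealI K n ^ (2 * L + 2) := by
    intro g r hg h
    refine mem_of_eq (r := r) (m := 1) (x := g) (by simpa using hg) hW (by omega) ?_
    rw [← mul_assoc, h]; ring
  have split : ∀ j : Fin n, ∃ R : MvPolynomial (Vars n) K, ∃ N : ℕ, N + ew n L j = 2 * L + 1 ∧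
      R ∈ idealI K n ^ N ∧ ∏ i, ww K n L i = ww K n L j * R := by
    intro j
    refine ⟨_, _, ?_, prod_ww_mem K n L (Finset.univ.erase j), ?_⟩
    · rw [← sum_ew n L hL]; exact Finset.sum_erase_add _ _ (Finset.mem_univ j)
    · exact (Finset.mul_prod_erase _ _ (Finset.mem_univ j)).symm
  rcases v with v | j | j
  · fin_cases v
    · exact single _ (vb K n ^ 3) (g2 K n) (by simp only [va]; simp; ring)
    · exact single _ (va K n ^ 3) (g3 K n) (by simp only [vb]; simp; ring)
    · exact single _ 1 (g5 K n) (by simp only [vc]; simp; ring)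
    · exact single _ 1 (g6 K n) (by simp only [vd]; simp; ring)
  · obtain ⟨R, N, hN, hR, e⟩ := split j
    rw [e]
    change vx K n j * _ ∈ _
    unfold ew at hN
    unfold ww
    split_ifs at hN ⊢
    · exact mem_of_eq (r := va K n ^ 2 * vy K n j) (mul3 (gB K n j) (gB K n j) (g1 K n)) hR
        (by omega) (by ring)
    · exact mem_of_eq (m := 1) (r := va K n ^ 4) (by simpa using gB K n j) hR
        (by omega) (by ring)
    · exact mem_of_eq (r := va K n ^ 2 * vy K n j) (mul2 (gB K n j) (g1 K n)) hR
        (by omega) (by ring)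
  · obtain ⟨R, N, hN, hR, e⟩ := split j
    have hj := hv j rfl
    rw [e]
    change vy K n j * _ ∈ _
    unfold ew at hN
    unfold ww
    split_ifs at hN ⊢
    · exact mem_of_eq (r := vb K n ^ 2 * vx K n j) (mul3 (gA K n j) (gA K n j) (g4 K n)) hR
        (by omega) (by ring)
    · exact mem_of_eq (m := 1) (r := vb K n ^ 4) (by simpa using gA K n j) hR
        (by omega) (by ring)

theorem mu_a (L : ℕ) (hL : L + 1 ≤ n) : mu n L (Sum.inl 0) = 4 * L + 8 := by
  have : ∀ i : Fin n, om n L i (Sum.inl 0) = 4 * (if (i : ℕ) < L then 1 else 0) +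
      4 * (if (i : ℕ) + 1 < n then 0 else 1) := by
    intro i; unfold om; split_ifs <;> first | omega | simp
  have h := Finset.sum_congr rfl (fun i (_ : i ∈ Finset.univ) => this i)
  rw [Finset.sum_add_distrib, ← Finset.mul_sum, ← Finset.mul_sum,
    sum_lt n L hL, sum_last n (by omega)] at h
  simp only [mu, Finsupp.add_apply, Finsupp.finsetSum_apply, h]
  simp
  omega

theorem mu_b (L : ℕ) (hL : L + 1 ≤ n) : mu n L (Sum.inl 1) = 4 * L + 4 := by
  have : ∀ i : Fin n, om n L i (Sum.inl 1) = 4 * (if (i : ℕ) < L then 1 else 0) := by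
    intro i; unfold om; split_ifs <;> simp
  have h := Finset.sum_congr rfl (fun i (_ : i ∈ Finset.univ) => this i)
  rw [← Finset.mul_sum, sum_lt n L hL] at h
  simp only [mu, Finsupp.add_apply, Finsupp.finsetSum_apply, h]
  simp
  omega

theorem mu_c (L : ℕ) : mu n L (Sum.inl 2) = 0 := by
  have : ∀ i : Fin n, om n L i (Sum.inl 2) = 0 := by
    intro i; unfold om; split_ifs <;> simp
  simp [mu, Finsupp.finsetSum_apply, this]

theorem mu_d (L : ℕ) : mu n L (Sum.inl 3) = 0 := by
  have : ∀ i : Fin n, om n L i (Sum.inl 3) = 0 := by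
    intro i; unfold om; split_ifs <;> simp
  simp [mu, Finsupp.finsetSum_apply, this]

theorem mu_x (L : ℕ) (j : Fin n) :
    mu n L (Sum.inr (Sum.inl j)) = if (j : ℕ) < L then 3 else 1 := by
  have : ∀ i : Fin n, om n L i (Sum.inr (Sum.inl j)) =
      if i = j then (if (j : ℕ) < L then 3 else 1) else 0 := by
    intro i
    by_cases e : i = j
    · subst e; unfold om; rw [if_pos rfl]; split_ifs <;> simp
    · unfold om; split_ifs <;> simp [e]
  simp [mu, Finsupp.finsetSum_apply, this]

theorem mu_y (L : ℕ) (j : Fin n) (hj : (j : ℕ) + 1 < n) :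
    mu n L (Sum.inr (Sum.inr j)) = if (j : ℕ) < L then 3 else 1 := by
  have : ∀ i : Fin n, om n L i (Sum.inr (Sum.inr j)) =
      if i = j then (if (j : ℕ) < L then 3 else 1) else 0 := by
    intro i
    by_cases e : i = j
    · subst e; unfold om; rw [if_pos rfl]; split_ifs <;> simp
    · unfold om; split_ifs <;> simp [e]
  simp [mu, Finsupp.finsetSum_apply, this]

theorem not_mem_EE (L : ℕ) (hL : L + 1 ≤ n) (τ : Vars n →₀ ℕ) (hτ : ∀ v ∈ SP n, τ v = 0) :
    τ + mu n L ∉ EE n (2 * L + 2) := by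
  rintro ⟨p, q, u1, u2, u3, u4, t, h1, h2, h3, h4, h5, h6⟩
  have za : τ (Sum.inl 0) = 0 := hτ _ (by simp [SP])
  have zb : τ (Sum.inl 1) = 0 := hτ _ (by simp [SP])
  have zc : τ (Sum.inl 2) = 0 := hτ _ (by simp [SP])
  have zd : τ (Sum.inl 3) = 0 := hτ _ (by simp [SP])
  have zx : ∀ i, τ (Sum.inr (Sum.inl i)) = 0 := fun i => hτ _ (by simp [SP])
  have zy : ∀ i : Fin n, (i : ℕ) + 1 < n → τ (Sum.inr (Sum.inr i)) = 0 :=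
    fun i hi => hτ _ (by simpa [SP] using hi)
  simp only [Finsupp.add_apply, za, zb, zc, zd, zx, mu_a n L hL, mu_b n L hL, mu_c, mu_d, mu_x]
    at h1 h3 h4 h5
  have hp : ∑ i, p i ≤ L + 1 := by
    calc ∑ i, p i ≤ ∑ i : Fin n, ((if (i : ℕ) < L then 1 else 0) +
          (if (i : ℕ) + 1 < n then 0 else 1)) := by
          refine Finset.sum_le_sum fun i _ => ?_
          have a1 := h1 i
          have a2 := h2 i
          by_cases hi : (i : ℕ) + 1 < n
          · rw [Finsupp.add_apply, zy i hi, mu_y n L i hi] at a2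
            split_ifs at * <;> omega
          · have : ¬ (i : ℕ) < L := by omega
            simp only [hi, this, if_false] at *
            omega
      _ = L + 1 := by rw [Finset.sum_add_distrib, sum_lt n L hL, sum_last n (by omega)]
  have hq : ∑ i, q i ≤ L := by
    calc ∑ i, q i ≤ ∑ i : Fin n, (if (i : ℕ) < L then 1 else 0) := by
          refine Finset.sum_le_sum fun i _ => ?_
          have a1 := h1 i
          split_ifs at * <;> omega
      _ = L := sum_lt n L hL
  have hu : u1 + u2 + u3 + u4 ≤ 2 := by omega
  have b1 : u1 ≤ 2 := by omega
  have b2 : u2 ≤ 2 := by omega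
  have b3 : u3 ≤ 2 := by omega
  have b4 : u4 ≤ 2 := by omega
  interval_cases u1 <;> interval_cases u2 <;> interval_cases u3 <;> interval_cases u4 <;> omega

/-- For every even integer `k` with `2 ≤ k ≤ 2n`, the prime ideal `P` (generated by all
variables except `yₙ`) is an associated prime of `S/Iᵏ`. -/
theorem P_mem_associatedPrimes (hn : 1 ≤ n) (k : ℕ) (heven : Even k)
    (h1 : 2 ≤ k) (h2 : k ≤ 2 * n) :
    idealP K n ∈ associatedPrimes (MvPolynomial (Vars n) K)
      (MvPolynomial (Vars n) K ⧸ (idealI K n) ^ k) := by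
  obtain ⟨L, rfl⟩ : ∃ L, k = 2 * L + 2 := by
    obtain ⟨r, rfl⟩ := heven
    exact ⟨r - 1, by omega⟩
  have hL : L + 1 ≤ n := by omega
  have hP : (idealP K n).IsPrime := by
    rw [idealP_eq]; exact isPrime_span_X_set K _
  refine (Submodule.isAssociatedPrime_iff).2 ⟨hP, Ideal.Quotient.mk _ (wit K n L), ?_⟩
  have hmem : ∀ f : MvPolynomial (Vars n) K,
      f ∈ (⊥ : Submodule (MvPolynomial (Vars n) K)
        (MvPolynomial (Vars n) K ⧸ (idealI K n) ^ (2 * L + 2))).colon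
          {Ideal.Quotient.mk _ (wit K n L)} ↔ f * wit K n L ∈ idealI K n ^ (2 * L + 2) := by
    intro f
    rw [Submodule.mem_colon_singleton, Submodule.mem_bot, ← Ideal.Quotient.eq_zero_iff_mem,
      map_mul]
    rfl
  apply le_antisymm
  · rw [idealP_eq, Ideal.span_le]
    rintro _ ⟨v, hv, rfl⟩
    exact (hmem _).2 (X_mul_wit K n L hL v hv)
  · intro f hf
    rw [hmem] at hf
    rw [idealP_eq, mem_ideal_span_X_image]
    intro τ hτ
    by_contra! hc
    have h := pow_le_EE K n _ hf
    rw [mem_ideal_span_monomial_image] at h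
    obtain ⟨s, hs, hle⟩ := h (τ + mu n L) (by
      rw [mem_support_iff, wit_eq, coeff_mul_monomial, mul_one]
      exact mem_support_iff.1 hτ)
    exact not_mem_EE n L hL τ hc (EE_up n _ hs hle)
end
end
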